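/- arXiv:1503.05931 — 2 statements merged into one kernel-verified Lean document; each statement's English description precedes it below -/
import Mathlib

section
/- Every compact, locally connected metric space X is locally arcwise connected: for every point p ∈ X and every neighborhood U of p, there exists a neighborhood V of p contained in U such that any two distinct points of V are joined by an arc whose image is contained in V. -/
open Function Set Topology

/-- `x` and `y` are joined by an arc (a continuous injective path) lying in `S`. -/
def JoinedByArcIn {X : Type*} [TopologicalSpace X] (S : Set X) (x y : X) : Prop :=
  ∃ γ : unitInterval → X, Continuous γ ∧ Function.Injective γ ∧
    γ 0 = x ∧ γ 1 = y ∧ Set.range γ ⊆ S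

open Filter
open scoped unitInterval

/-!
In a locally connected space any two points of a small connected set are joined by a chain of points
whose consecutive members lie in common, much smaller connected sets. Refining such a chain again
and again, with the diameters halved at each stage, gives step functions that converge uniformly and
whose jumps tend to zero; if the space is complete, the limit is a path. So the space is locally
path connected.

To extract an arc from a path `γ`, call a closed set `F` of parameters admissible if `γ` takes equal
values at the two ends of each gap of `F`. By Zorn's lemma there is a minimal admissible `F`; making
`γ` constant on its gaps leaves a path without loops, that is, one whose fibers are intervals.
Reparametrizing it by the mean distance from its points to the part not yet traversed makes it
injective.
-/

section LocallyPathConnected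

variable {X : Type*}

/-- `a` and `b` lie in a common preconnected set of diameter at most `r`. -/
def ConnectedWithin [PseudoMetricSpace X] (r : ℝ) (a b : X) : Prop :=
  ∃ C : Set X, IsPreconnected C ∧ a ∈ C ∧ b ∈ C ∧ ∀ u ∈ C, ∀ v ∈ C, dist u v ≤ r

theorem ConnectedWithin.symm [PseudoMetricSpace X] {r : ℝ} {a b : X}
    (h : ConnectedWithin r a b) : ConnectedWithin r b a := by
  obtain ⟨C, hC, ha, hb, hdist⟩ := h
  exact ⟨C, hC, hb, ha, hdist⟩

theorem ConnectedWithin.dist_le [PseudoMetricSpace X] {r : ℝ} {a b : X}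
    (h : ConnectedWithin r a b) : dist a b ≤ r := by
  obtain ⟨C, -, ha, hb, hdist⟩ := h
  exact hdist a ha b hb

theorem eventually_connectedWithin [PseudoMetricSpace X] [LocallyConnectedSpace X]
    {r : ℝ} (hr : 0 < r) (a : X) : ∀ᶠ b in 𝓝 a, ConnectedWithin r a b := by
  have hball : Metric.closedBall a (r / 2) ∈ 𝓝 a := Metric.closedBall_mem_nhds a (half_pos hr)
  filter_upwards [connectedComponentIn_mem_nhds hball] with b hb
  refine ⟨_, isPreconnected_connectedComponentIn,
    mem_connectedComponentIn (mem_of_mem_nhds hball), hb, fun u hu v hv => ?_⟩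
  have hua : dist u a ≤ r / 2 := Metric.mem_closedBall.1 (connectedComponentIn_subset _ _ hu)
  have hva : dist v a ≤ r / 2 := Metric.mem_closedBall.1 (connectedComponentIn_subset _ _ hv)
  calc dist u v ≤ dist u a + dist v a := dist_triangle_right u v a
    _ ≤ r / 2 + r / 2 := add_le_add hua hva
    _ = r := add_halves r

/-- A chain of `R`-related points from `a` to `b`, parametrized as a step function `f` on `[0, 1]`.
Only jumps at a single parameter and concatenation are allowed, with the parametrization recorded,
so that refining each jump separately keeps the step function uniformly close to `f`. -/
inductive StepCurve (R : X → X → Prop) : X → X → (ℝ → X) → Prop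
  | jump {a b : X} (h : R a b) : StepCurve R a b fun t => if t ≤ 0 then a else b
  | concat {a b c : X} {f g : ℝ → X} (hf : StepCurve R a b f) (hg : StepCurve R b c g) :
      StepCurve R a c fun t => if t ≤ 1 / 2 then f (2 * t) else g (2 * t - 1)

namespace StepCurve

variable {R : X → X → Prop} {a b : X} {f : ℝ → X}

theorem apply_zero (h : StepCurve R a b f) : f 0 = a := by
  induction h with
  | jump _ => exact if_pos le_rfl
  | concat _ _ ihf _ => simpa using ihf

theorem apply_one (h : StepCurve R a b f) : f 1 = b := by
  induction h with
  | jump _ => exact if_neg one_pos.not_ge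
  | concat _ _ _ ihg => norm_num [ihg]

variable [PseudoMetricSpace X]

theorem eventually_dist_le {ε : ℝ} (hR : ∀ x y, R x y → dist x y ≤ ε) (h : StepCurve R a b f)
    (t : ℝ) : ∀ᶠ s in 𝓝 t, dist (f s) (f t) ≤ ε := by
  induction h generalizing t with
  | @jump a b hab =>
    have hdist := hR a b hab
    have hε : 0 ≤ ε := dist_nonneg.trans hdist
    refine .of_forall fun s => ?_
    dsimp only
    split_ifs
    · rwa [dist_self]
    · exact hdist
    · rwa [dist_comm]
    · rwa [dist_self]
  | @concat a b c f g hf hg ihf ihg =>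
    have hleft : ∀ᶠ s in 𝓝 t, dist (f (2 * s)) (f (2 * t)) ≤ ε :=
      (continuous_const_mul (2 : ℝ)).continuousAt.eventually (ihf (2 * t))
    have hright : ∀ᶠ s in 𝓝 t, dist (g (2 * s - 1)) (g (2 * t - 1)) ≤ ε :=
      (by fun_prop : Continuous fun s : ℝ => 2 * s - 1).continuousAt.eventually (ihg (2 * t - 1))
    rcases lt_trichotomy t (1 / 2) with ht | rfl | ht
    · filter_upwards [hleft, eventually_le_nhds ht] with s hs hst
      rwa [if_pos hst, if_pos ht.le]
    · have hjoin : f (2 * (1 / 2)) = g (2 * (1 / 2) - 1) := by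
        norm_num [hf.apply_one, hg.apply_zero]
      filter_upwards [hleft, hright] with s hs hs'
      rw [if_pos le_rfl]
      split_ifs
      · exact hs
      · rwa [hjoin]
    · filter_upwards [hright, eventually_gt_nhds ht] with s hs hst
      rwa [if_neg hst.not_ge, if_neg ht.not_ge]

theorem exists_of_isPreconnected [LocallyConnectedSpace X] {r : ℝ} (hr : 0 < r) {C : Set X}
    (hC : IsPreconnected C) (ha : a ∈ C) (hb : b ∈ C) :
    ∃ f, StepCurve (ConnectedWithin r) a b f ∧ ∀ t, f t ∈ C := by
  refine hC.induction₂' (fun x y => ∃ f, StepCurve (ConnectedWithin r) x y f ∧ ∀ t, f t ∈ C)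
    (fun x hx => ?_) ?_ ha hb
  · filter_upwards [self_mem_nhdsWithin, nhdsWithin_le_nhds (eventually_connectedWithin hr x)]
      with y hy hxy
    exact ⟨⟨_, jump hxy, fun t => by split_ifs <;> assumption⟩,
      ⟨_, jump hxy.symm, fun t => by split_ifs <;> assumption⟩⟩
  · rintro x y z - - - ⟨f, hf, hfC⟩ ⟨g, hg, hgC⟩
    exact ⟨_, concat hf hg, fun t => by split_ifs <;> simp only [hfC, hgC]⟩

theorem exists_refinement [LocallyConnectedSpace X] {r r' : ℝ} (hr' : 0 < r')
    (h : StepCurve (ConnectedWithin r) a b f) :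
    ∃ g, StepCurve (ConnectedWithin r') a b g ∧ ∀ t, dist (f t) (g t) ≤ r := by
  induction h with
  | jump hab =>
    obtain ⟨C, hC, ha, hb, hdist⟩ := hab
    obtain ⟨g, hg, hgC⟩ := exists_of_isPreconnected hr' hC ha hb
    exact ⟨g, hg, fun t => hdist _ (by dsimp only; split_ifs <;> assumption) _ (hgC t)⟩
  | concat _ _ ihf ihg =>
    obtain ⟨f', hf', hff'⟩ := ihf
    obtain ⟨g', hg', hgg'⟩ := ihg
    exact ⟨_, concat hf' hg', fun t => by dsimp only; split_ifs; exacts [hff' _, hgg' _]⟩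

end StepCurve

theorem continuous_of_tendstoUniformly_of_eventually_dist_le {Y ι : Type*} [TopologicalSpace Y]
    [PseudoMetricSpace X] {l : Filter ι} [l.NeBot] {F : ι → Y → X} {f : Y → X} {ε : ι → ℝ}
    (hF : TendstoUniformly F f l) (hε : Tendsto ε l (𝓝 0))
    (h : ∀ i t, ∀ᶠ s in 𝓝 t, dist (F i s) (F i t) ≤ ε i) : Continuous f := by
  refine continuous_iff_continuousAt.2 fun t => Metric.tendsto_nhds.2 fun δ hδ => ?_
  obtain ⟨i, hFi, hεi⟩ := ((Metric.tendstoUniformly_iff.1 hF (δ / 3) (by positivity)).and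
    (hε.eventually_lt_const (by positivity : 0 < δ / 3))).exists
  filter_upwards [h i t] with s hs
  calc dist (f s) (f t) ≤ dist (f s) (F i s) + dist (F i s) (F i t) + dist (F i t) (f t) :=
        dist_triangle4 _ _ _ _
    _ < δ / 3 + δ / 3 + δ / 3 := by
        rw [dist_comm (F i t)]
        exact add_lt_add (add_lt_add (hFi s) (hs.trans_lt hεi)) (hFi t)
    _ = δ := by ring

theorem exists_seq_stepCurve [PseudoMetricSpace X] [LocallyConnectedSpace X] {ε : ℕ → ℝ}
    (hε : ∀ n, 0 < ε n) {a b : X} (hab : ConnectedWithin (ε 0) a b) :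
    ∃ F : ℕ → ℝ → X, (∀ t, F 0 t = a ∨ F 0 t = b) ∧
      (∀ n, StepCurve (ConnectedWithin (ε n)) a b (F n)) ∧
      ∀ n t, dist (F n t) (F (n + 1) t) ≤ ε n := by
  choose! refined hstep hdist using fun (n : ℕ) (f : ℝ → X)
    (hf : StepCurve (ConnectedWithin (ε n)) a b f) => hf.exists_refinement (hε (n + 1))
  let F (n : ℕ) : ℝ → X := Nat.rec (fun t => if t ≤ 0 then a else b) refined n
  have hF (n : ℕ) : StepCurve (ConnectedWithin (ε n)) a b (F n) := by
    induction n with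
    | zero => exact .jump hab
    | succ n ih => exact hstep n (F n) ih
  exact ⟨F, fun t => ite_eq_or_eq _ _ _, hF, fun n => hdist n (F n) (hF n)⟩

variable [MetricSpace X] [LocallyConnectedSpace X] [CompleteSpace X]

theorem ConnectedWithin.joinedIn {r : ℝ} (hr : 0 < r) {a b : X}
    (hab : ConnectedWithin (r / 2) a b) : JoinedIn (Metric.closedBall a (2 * r)) a b := by
  obtain ⟨F, hF₀, hF, hdist⟩ := exists_seq_stepCurve
    (ε := fun n => r / 2 / 2 ^ n) (fun n => by positivity) (by rwa [pow_zero, div_one])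
  choose f hf using fun t =>
    cauchySeq_tendsto_of_complete (cauchySeq_of_le_geometric_two (hdist · t))
  have hbound (n : ℕ) (t : ℝ) : dist (F n t) (f t) ≤ r / 2 ^ n :=
    dist_le_of_le_geometric_two_of_tendsto (hdist · t) (hf t) n
  have hzero (c : ℝ) : Tendsto (fun n : ℕ => c / 2 ^ n) atTop (𝓝 0) :=
    tendsto_const_nhds.div_atTop (tendsto_pow_atTop_atTop_of_one_lt one_lt_two)
  have hunif : TendstoUniformly F f atTop := Metric.tendstoUniformly_iff.2 fun ε hε => by
    filter_upwards [(hzero r).eventually_lt_const hε] with n hn t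
    rw [dist_comm]
    exact (hbound n t).trans_lt hn
  have hcont : Continuous f := continuous_of_tendstoUniformly_of_eventually_dist_le hunif
    (hzero (r / 2)) fun n => (hF n).eventually_dist_le fun _ _ => dist_le
  have hf₀ : f 0 = a :=
    tendsto_nhds_unique (hf 0) (by simp only [(hF _).apply_zero, tendsto_const_nhds])
  have hf₁ : f 1 = b :=
    tendsto_nhds_unique (hf 1) (by simp only [(hF _).apply_one, tendsto_const_nhds])
  refine ⟨⟨⟨fun t => f t, hcont.comp continuous_subtype_val⟩, hf₀, hf₁⟩, fun t => ?_⟩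
  have hstart : dist (F 0 t) a ≤ r / 2 := by
    rcases hF₀ t with h | h
    · rw [h, dist_self]; positivity
    · rw [h, dist_comm]; exact hab.dist_le
  calc dist (f t) a ≤ dist (F 0 t) (f t) + dist (F 0 t) a := dist_triangle_left _ _ _
    _ ≤ r / 2 ^ 0 + r / 2 := add_le_add (hbound 0 t) hstart
    _ ≤ 2 * r := by linarith

theorem locallyPathConnectedSpace_of_completeSpace : LocallyPathConnectedSpace X := by
  refine locallyPathConnectedSpace_iff_pathComponentIn_mem_nhds.2 fun x U hU hx => ?_
  obtain ⟨ε, hε, hεU⟩ := Metric.nhds_basis_closedBall.mem_iff.1 (hU.mem_nhds hx)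
  filter_upwards [eventually_connectedWithin (show 0 < ε / 2 / 2 by positivity) x] with y hy
  have hjoin := hy.joinedIn (half_pos hε)
  rw [mul_div_cancel₀ _ two_ne_zero] at hjoin
  exact hjoin.mono hεU

end LocallyPathConnected

section NearestPoints

variable {K : Type*} [CompleteLinearOrder K]

/-- The last point of `F` that is at most `t`, provided that `F` is closed and contains `⊥`. -/
def floorIn (F : Set K) (t : K) : K := sSup (F ∩ Iic t)

/-- The first point of `F` that is at least `t`, provided that `F` is closed and contains `⊤`. -/
def ceilIn (F : Set K) (t : K) : K := sInf (F ∩ Ici t)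

theorem floorIn_le_floorIn_of_subset {F G : Set K} (h : F ⊆ G) (t : K) :
    floorIn F t ≤ floorIn G t :=
  sSup_le_sSup (inter_subset_inter_left _ h)

theorem floorIn_monotone (F : Set K) : Monotone (floorIn F) := fun _ _ h =>
  sSup_le_sSup (inter_subset_inter_right _ (Iic_subset_Iic.2 h))

variable [TopologicalSpace K] [OrderTopology K]

theorem isGreatest_floorIn {F : Set K} (hF : IsClosed F) (hbot : ⊥ ∈ F) (t : K) :
    IsGreatest (F ∩ Iic t) (floorIn F t) :=
  (hF.inter isClosed_Iic).isCompact.isGreatest_sSup ⟨⊥, hbot, bot_le⟩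

theorem isLeast_ceilIn {F : Set K} (hF : IsClosed F) (htop : ⊤ ∈ F) (t : K) :
    IsLeast (F ∩ Ici t) (ceilIn F t) :=
  (hF.inter isClosed_Ici).isCompact.isLeast_sInf ⟨⊤, htop, le_top⟩

theorem continuousWithinAt_floorIn_Ici {F : Set K} (hF : IsClosed F) (hbot : ⊥ ∈ F) (t : K) :
    ContinuousWithinAt (floorIn F) (Ici t) t := by
  rw [← continuousWithinAt_Ioi_iff_Ici, ContinuousWithinAt]
  rcases (𝓝[>] t).eq_or_neBot with h | _
  · simp only [h, tendsto_bot]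
  have hlim := (floorIn_monotone F).tendsto_nhdsGT t
  suffices h : sInf (floorIn F '' Ioi t) = floorIn F t by rwa [h] at hlim
  refine le_antisymm (le_sSup ⟨?_, ?_⟩) (le_sInf ?_)
  · exact hF.mem_of_tendsto hlim (.of_forall fun s => (isGreatest_floorIn hF hbot s).1.1)
  · exact le_of_tendsto_of_tendsto' hlim nhdsWithin_le_nhds
      fun s => (isGreatest_floorIn hF hbot s).1.2
  · rintro _ ⟨s, hs, rfl⟩
    exact floorIn_monotone F (le_of_lt hs)

theorem continuousWithinAt_ceilIn_Iic {F : Set K} (hF : IsClosed F) (htop : ⊤ ∈ F) (t : K) :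
    ContinuousWithinAt (ceilIn F) (Iic t) t :=
  continuousWithinAt_floorIn_Ici (K := Kᵒᵈ) hF htop t

theorem tendsto_floorIn_sInter {c : Set (Set K)} (hc : IsChain (· ⊇ ·) c) (hne : c.Nonempty)
    (hclosed : ∀ F ∈ c, IsClosed F) (hbot : ∀ F ∈ c, ⊥ ∈ F) (t : K) :
    Tendsto (fun F : c => floorIn (F : Set K) t) atBot (𝓝 (floorIn (⋂₀ c) t)) := by
  have : IsCodirectedOrder c := ⟨hc.directedOn.directed_val⟩
  have : Nonempty c := hne.to_subtype
  have hlim := tendsto_atBot_iInf fun (F G : c) (h : F ≤ G) => floorIn_le_floorIn_of_subset h t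
  suffices h : ⨅ F : c, floorIn (F : Set K) t = floorIn (⋂₀ c) t by rwa [h] at hlim
  refine le_antisymm (le_sSup ⟨fun G hG => ?_, ?_⟩)
    (le_iInf fun F => floorIn_le_floorIn_of_subset (sInter_subset_of_mem F.2) t)
  · refine (hclosed G hG).mem_of_tendsto hlim ?_
    filter_upwards [eventually_le_atBot (⟨G, hG⟩ : c)] with F hFG
    exact hFG (isGreatest_floorIn (hclosed F F.2) (hbot F F.2) t).1.1
  · obtain ⟨F, hF⟩ := hne
    exact iInf_le_of_le ⟨F, hF⟩ (isGreatest_floorIn (hclosed F hF) (hbot F hF) t).1.2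

theorem tendsto_ceilIn_sInter {c : Set (Set K)} (hc : IsChain (· ⊇ ·) c) (hne : c.Nonempty)
    (hclosed : ∀ F ∈ c, IsClosed F) (htop : ∀ F ∈ c, ⊤ ∈ F) (t : K) :
    Tendsto (fun F : c => ceilIn (F : Set K) t) atBot (𝓝 (ceilIn (⋂₀ c) t)) :=
  tendsto_floorIn_sInter (K := Kᵒᵈ) hc hne hclosed htop t

end NearestPoints

section Gaps

variable {K X : Type*} [CompleteLinearOrder K] [TopologicalSpace K]

/-- `F` is closed, contains both endpoints, and `γ` takes the same value at the two ends of every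
gap of `F`, so that replacing `γ` by a constant on each gap leaves it continuous. For `t ∈ F` the
last condition is vacuous, since then `floorIn F t = ceilIn F t = t`. -/
structure AgreesAcrossGaps (γ : K → X) (F : Set K) : Prop where
  isClosed : IsClosed F
  bot_mem : ⊥ ∈ F
  top_mem : ⊤ ∈ F
  apply_floorIn (t : K) : γ (floorIn F t) = γ (ceilIn F t)

theorem AgreesAcrossGaps.univ (γ : K → X) : AgreesAcrossGaps γ (univ : Set K) where
  isClosed := isClosed_univ
  bot_mem := mem_univ _
  top_mem := mem_univ _
  apply_floorIn t := by simp only [floorIn, ceilIn, univ_inter, csSup_Iic, csInf_Ici]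

variable [OrderTopology K]

namespace AgreesAcrossGaps

variable {γ : K → X} {F : Set K}

theorem isGreatest (h : AgreesAcrossGaps γ F) (t : K) : IsGreatest (F ∩ Iic t) (floorIn F t) :=
  isGreatest_floorIn h.isClosed h.bot_mem t

theorem isLeast (h : AgreesAcrossGaps γ F) (t : K) : IsLeast (F ∩ Ici t) (ceilIn F t) :=
  isLeast_ceilIn h.isClosed h.top_mem t

theorem sInter [TopologicalSpace X] [T2Space X] (hγ : Continuous γ) {c : Set (Set K)}
    (hc : IsChain (· ⊇ ·) c) (hne : c.Nonempty) (h : ∀ F ∈ c, AgreesAcrossGaps γ F) :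
    AgreesAcrossGaps γ (⋂₀ c) where
  isClosed := isClosed_sInter fun F hF => (h F hF).isClosed
  bot_mem F hF := (h F hF).bot_mem
  top_mem F hF := (h F hF).top_mem
  apply_floorIn t := by
    have : IsCodirectedOrder c := ⟨hc.directedOn.directed_val⟩
    have : Nonempty c := hne.to_subtype
    have hfloor := (hγ.tendsto _).comp <| tendsto_floorIn_sInter hc hne
      (fun F hF => (h F hF).isClosed) (fun F hF => (h F hF).bot_mem) t
    have hceil := (hγ.tendsto _).comp <| tendsto_ceilIn_sInter hc hne
      (fun F hF => (h F hF).isClosed) (fun F hF => (h F hF).top_mem) t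
    exact tendsto_nhds_unique hfloor (hceil.congr fun F => ((h F F.2).apply_floorIn t).symm)

theorem exists_minimal [TopologicalSpace X] [T2Space X] (hγ : Continuous γ) :
    ∃ F, Minimal (AgreesAcrossGaps γ) F := by
  obtain ⟨F, -, hF⟩ := zorn_superset_nonempty {F | AgreesAcrossGaps γ F}
    (fun c hc hchain hne =>
      ⟨⋂₀ c, sInter hγ hchain.symm hne hc, fun _ => sInter_subset_of_mem⟩) Set.univ (univ γ)
  exact ⟨F, hF⟩

theorem sdiff_Ioo (h : AgreesAcrossGaps γ F) {a b : K} (ha : a ∈ F) (hb : b ∈ F)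
    (heq : γ a = γ b) : AgreesAcrossGaps γ (F \ Ioo a b) := by
  have hclosed : IsClosed (F \ Ioo a b) := h.isClosed.sdiff isOpen_Ioo
  have hbot : ⊥ ∈ F \ Ioo a b := ⟨h.bot_mem, fun hmem => not_lt_bot hmem.1⟩
  have htop : ⊤ ∈ F \ Ioo a b := ⟨h.top_mem, fun hmem => not_top_lt hmem.2⟩
  refine ⟨hclosed, hbot, htop, fun t => ?_⟩
  have hfloor := isGreatest_floorIn hclosed hbot t
  have hceil := isLeast_ceilIn hclosed htop t
  by_cases ht : t ∈ Ioo a b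
  · have hfloor_eq : floorIn (F \ Ioo a b) t = a := hfloor.unique
      ⟨⟨⟨ha, fun hmem => hmem.1.false⟩, ht.1.le⟩, fun s ⟨⟨_, hs⟩, hst⟩ =>
        not_lt.1 fun has => hs ⟨has, lt_of_le_of_lt hst ht.2⟩⟩
    have hceil_eq : ceilIn (F \ Ioo a b) t = b := hceil.unique
      ⟨⟨⟨hb, fun hmem => hmem.2.false⟩, ht.2.le⟩, fun s ⟨⟨_, hs⟩, hts⟩ =>
        not_lt.1 fun hsb => hs ⟨lt_of_lt_of_le ht.1 hts, hsb⟩⟩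
    rw [hfloor_eq, hceil_eq, heq]
  · have hfloor_eq : floorIn (F \ Ioo a b) t = floorIn F t := by
      refine le_antisymm (floorIn_le_floorIn_of_subset sdiff_subset t)
        (hfloor.2 ⟨⟨(h.isGreatest t).1.1, fun hmem => ?_⟩, (h.isGreatest t).1.2⟩)
      have hbt : b ≤ t := not_lt.1 fun htb => ht ⟨hmem.1.trans_le (h.isGreatest t).1.2, htb⟩
      exact hmem.2.not_ge ((h.isGreatest t).2 ⟨hb, hbt⟩)
    have hceil_eq : ceilIn (F \ Ioo a b) t = ceilIn F t := by
      refine le_antisymm (hceil.2 ⟨⟨(h.isLeast t).1.1, fun hmem => ?_⟩, (h.isLeast t).1.2⟩)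
        ((h.isLeast t).2 ⟨hceil.1.1.1, hceil.1.2⟩)
      have hta : t ≤ a := not_lt.1 fun hat => ht ⟨hat, (h.isLeast t).1.2.trans_lt hmem.2⟩
      exact hmem.1.not_ge ((h.isLeast t).2 ⟨ha, hta⟩)
    rw [hfloor_eq, hceil_eq, h.apply_floorIn]

theorem continuous_comp_floorIn [TopologicalSpace X] (h : AgreesAcrossGaps γ F)
    (hγ : Continuous γ) : Continuous (γ ∘ floorIn F) := by
  refine continuous_iff_continuousAt.2 fun t => continuousAt_iff_continuous_left_right.2 ⟨?_, ?_⟩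
  · have hceil := continuousWithinAt_ceilIn_Iic h.isClosed h.top_mem t
    rw [show γ ∘ floorIn F = γ ∘ ceilIn F from funext h.apply_floorIn]
    exact hγ.continuousAt.comp_continuousWithinAt hceil
  · have hfloor := continuousWithinAt_floorIn_Ici h.isClosed h.bot_mem t
    exact hγ.continuousAt.comp_continuousWithinAt hfloor

theorem disjoint_Ioo_of_minimal (hF : Minimal (AgreesAcrossGaps γ) F) {a b : K} (ha : a ∈ F)
    (hb : b ∈ F) (heq : γ a = γ b) : Disjoint F (Ioo a b) :=
  disjoint_left.2 fun _ hs => (hF.le_of_le (hF.prop.sdiff_Ioo ha hb heq) sdiff_subset hs).2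

end AgreesAcrossGaps

theorem ordConnected_fiber_comp_floorIn {γ : K → X} {F : Set K}
    (hF : Minimal (AgreesAcrossGaps γ) F) (x : X) : OrdConnected (γ ∘ floorIn F ⁻¹' {x}) := by
  refine ⟨fun s hs t ht u hu => ?_⟩
  have hmem (r : K) : floorIn F r ∈ F := (hF.prop.isGreatest r).1.1
  have hsu := floorIn_monotone F hu.1
  have hut := floorIn_monotone F hu.2
  have hgap := disjoint_left.1 (AgreesAcrossGaps.disjoint_Ioo_of_minimal hF (hmem s) (hmem t)
    (hs.trans ht.symm)) (hmem u)
  rcases hsu.eq_or_lt with h | h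
  · exact (congrArg γ h.symm).trans hs
  · exact (congrArg γ (hut.eq_of_not_lt fun h' => hgap ⟨h, h'⟩)).trans ht

theorem exists_continuous_ordConnected_fibers [TopologicalSpace X] [T2Space X] {γ : K → X}
    (hγ : Continuous γ) :
    ∃ β : K → X, Continuous β ∧ β ⊥ = γ ⊥ ∧ β ⊤ = γ ⊤ ∧ range β ⊆ range γ ∧
      ∀ x, OrdConnected (β ⁻¹' {x}) := by
  obtain ⟨F, hF⟩ := AgreesAcrossGaps.exists_minimal hγ
  have hbot : floorIn F ⊥ = ⊥ := le_bot_iff.1 (hF.prop.isGreatest ⊥).1.2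
  have htop : floorIn F ⊤ = ⊤ := top_le_iff.1 ((hF.prop.isGreatest ⊤).2 ⟨hF.prop.top_mem, le_rfl⟩)
  exact ⟨γ ∘ floorIn F, hF.prop.continuous_comp_floorIn hγ, congrArg γ hbot, congrArg γ htop,
    range_comp_subset_range _ _, ordConnected_fiber_comp_floorIn hF⟩

end Gaps

section Reparametrization

variable {K X : Type*}

theorem image_Ici_eq_of_apply_eq [LinearOrder K] {γ : K → X}
    (hfib : ∀ x, OrdConnected (γ ⁻¹' {x})) {s t : K} (hst : s ≤ t) (h : γ s = γ t) :
    γ '' Ici s = γ '' Ici t := by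
  refine (image_mono (Ici_subset_Ici.2 hst)).antisymm' ?_
  rintro _ ⟨u, hu, rfl⟩
  rcases le_total t u with htu | hut
  · exact mem_image_of_mem γ htu
  · exact ⟨t, le_rfl, ((hfib (γ t)).out h rfl ⟨hu, hut⟩).symm⟩

theorem apply_mem_image_Ici_iff [LinearOrder K] {γ : K → X}
    (hfib : ∀ x, OrdConnected (γ ⁻¹' {x})) {s t : K} (hst : s ≤ t) :
    γ s ∈ γ '' Ici t ↔ γ s = γ t := by
  refine ⟨?_, fun h => ⟨t, le_rfl, h.symm⟩⟩
  rintro ⟨u, htu, hu⟩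
  exact ((hfib (γ s)).out rfl hu ⟨hst, htu⟩).symm

theorem infDist_image_Ici_mono [Preorder K] [PseudoMetricSpace X] (γ : K → X) {s t : K}
    (hst : s ≤ t) (x : X) : Metric.infDist x (γ '' Ici s) ≤ Metric.infDist x (γ '' Ici t) :=
  Metric.infDist_le_infDist_of_subset (image_mono (Ici_subset_Ici.2 hst)) (nonempty_Ici.image γ)

theorem continuous_infDist_image_Ici [LinearOrder K] [TopologicalSpace K]
    [OrderTopology K] [CompactSpace K] [PseudoMetricSpace X] {γ : K → X} (hγ : Continuous γ) :
    Continuous fun p : X × K => Metric.infDist p.1 (γ '' Ici p.2) := by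
  have hrange (t : K) : γ '' Ici t = range fun u => γ (u ⊔ t) := by
    ext x
    exact ⟨fun ⟨u, hu, hx⟩ => ⟨u, by simpa only [sup_eq_left.2 (mem_Ici.1 hu)] using hx⟩,
      fun ⟨u, hx⟩ => ⟨u ⊔ t, le_sup_right, hx⟩⟩
  have hinf (p : X × K) : Metric.infDist p.1 (γ '' Ici p.2) =
      sInf ((fun u => dist p.1 (γ (u ⊔ p.2))) '' univ) := by
    rw [hrange, Metric.infDist_eq_iInf, image_univ]
    exact iInf_range' (fun y => dist p.1 y) fun u => γ (u ⊔ p.2)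
  simp only [hinf]
  exact isCompact_univ.continuous_sInf (by fun_prop)

/-- The mean distance from the points of `γ` to the tail `γ '' Ici t`, used to reparametrize `γ`: it
never decreases with `t`, and it increases strictly when a value of `γ` is left for good. -/
noncomputable def meanDistToTail [PseudoMetricSpace X] (γ : I → X) (t : I) : ℝ :=
  ∫ q in (0 : ℝ)..1, Metric.infDist (γ (projIcc 0 1 zero_le_one q)) (γ '' Ici t)

theorem continuous_meanDistToTail [PseudoMetricSpace X] {γ : I → X} (hγ : Continuous γ) :
    Continuous (meanDistToTail γ) := by
  have hpair : Continuous fun p : I × ℝ => (γ (projIcc 0 1 zero_le_one p.2), p.1) :=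
    (hγ.comp (continuous_projIcc.comp continuous_snd)).prodMk continuous_fst
  have hintegrand := (continuous_infDist_image_Ici hγ).comp hpair
  exact intervalIntegral.continuous_parametric_intervalIntegral_of_continuous'
    (f := fun t q => Metric.infDist (γ (projIcc 0 1 zero_le_one q)) (γ '' Ici t)) hintegrand 0 1

theorem continuous_infDist_apply_projIcc [PseudoMetricSpace X] {γ : I → X}
    (hγ : Continuous γ) (S : Set X) : Continuous fun q : ℝ =>
      Metric.infDist (γ (projIcc 0 1 zero_le_one q)) S :=
  (Metric.continuous_infDist_pt S).comp (hγ.comp continuous_projIcc)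

theorem monotone_meanDistToTail [PseudoMetricSpace X] {γ : I → X} (hγ : Continuous γ) :
    Monotone (meanDistToTail γ) := fun _ _ hst =>
  intervalIntegral.integral_mono_on zero_le_one
    ((continuous_infDist_apply_projIcc hγ _).intervalIntegrable 0 1)
    ((continuous_infDist_apply_projIcc hγ _).intervalIntegrable 0 1)
    fun _ _ => infDist_image_Ici_mono γ hst _

variable [MetricSpace X] {γ : I → X}

theorem meanDistToTail_lt (hγ : Continuous γ) {s t : I} (hst : s ≤ t) (h : γ s ∉ γ '' Ici t) :
    meanDistToTail γ s < meanDistToTail γ t := by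
  have hclosed : IsClosed (γ '' Ici t) := (isClosed_Ici.isCompact.image hγ).isClosed
  refine intervalIntegral.integral_lt_integral_of_continuousOn_of_le_of_exists_lt one_pos
    (continuous_infDist_apply_projIcc hγ _).continuousOn
    (continuous_infDist_apply_projIcc hγ _).continuousOn
    (fun _ _ => infDist_image_Ici_mono γ hst _) ⟨s, s.2, ?_⟩
  simp only [projIcc_val]
  rw [Metric.infDist_zero_of_mem (mem_image_of_mem γ self_mem_Ici)]
  exact (hclosed.notMem_iff_infDist_pos (nonempty_Ici.image γ)).1 h

theorem meanDistToTail_eq_iff (hγ : Continuous γ) (hfib : ∀ x, OrdConnected (γ ⁻¹' {x}))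
    (s t : I) : meanDistToTail γ s = meanDistToTail γ t ↔ γ s = γ t := by
  wlog hst : s ≤ t generalizing s t
  · rw [eq_comm, this t s (le_of_not_ge hst), eq_comm]
  refine ⟨fun h => ?_, fun h => ?_⟩
  · by_contra hne
    exact (meanDistToTail_lt hγ hst fun hmem =>
      hne ((apply_mem_image_Ici_iff hfib hst).1 hmem)).ne h
  · rw [meanDistToTail, meanDistToTail, image_Ici_eq_of_apply_eq hfib hst h]

theorem exists_surjective_same_fibers_of_monotone {h : I → ℝ} (hcont : Continuous h)
    (hmono : Monotone h) (hne : h 0 ≠ h 1) :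
    ∃ H : C(I, I), Surjective H ∧ H 0 = 0 ∧ H 1 = 1 ∧ ∀ s t, H s = H t ↔ h s = h t := by
  have hlt : h 0 < h 1 := (hmono zero_le_one).lt_of_ne hne
  have hmem (t : I) : h t ∈ Icc (h 0) (h 1) := ⟨hmono t.2.1, hmono t.2.2⟩
  let φ : Icc (h 0) (h 1) ≃ₜ I := iccHomeoI (h 0) (h 1) hlt
  refine ⟨⟨fun t => φ ⟨h t, hmem t⟩, φ.continuous.comp (hcont.subtype_mk hmem)⟩, fun y => ?_,
    Subtype.ext ?_, Subtype.ext ?_, fun s t => φ.injective.eq_iff.trans Subtype.mk_eq_mk⟩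
  · obtain ⟨t, ht⟩ := mem_range_of_exists_le_of_exists_ge hcont ⟨0, (φ.symm y).2.1⟩
      ⟨1, (φ.symm y).2.2⟩
    exact ⟨t, (congrArg φ (Subtype.ext ht)).trans (φ.apply_symm_apply y)⟩
  · simp [φ]
  · simpa [φ] using div_self (sub_pos.2 hlt).ne'

theorem joinedByArcIn_range_of_ordConnected_fibers (hγ : Continuous γ)
    (hfib : ∀ x, OrdConnected (γ ⁻¹' {x})) (hne : γ 0 ≠ γ 1) :
    JoinedByArcIn (range γ) (γ 0) (γ 1) := by
  obtain ⟨H, hsurj, hzero, hone, hH⟩ := exists_surjective_same_fibers_of_monotone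
    (continuous_meanDistToTail hγ) (monotone_meanDistToTail hγ)
    (mt (meanDistToTail_eq_iff hγ hfib 0 1).1 hne)
  simp only [meanDistToTail_eq_iff hγ hfib] at hH
  have hquot : IsQuotientMap H := H.continuous.isClosedMap.isQuotientMap H.continuous hsurj
  have hfactor : FactorsThrough γ H := fun _ _ h => (hH _ _).1 h
  let α : C(I, X) := hquot.lift ⟨γ, hγ⟩ hfactor
  have hα (t : I) : α (H t) = γ t := DFunLike.congr_fun (hquot.lift_comp ⟨γ, hγ⟩ hfactor) t
  refine ⟨α, α.continuous, ?_, (congrArg α hzero).symm.trans (hα 0),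
    (congrArg α hone).symm.trans (hα 1), ?_⟩
  · refine hsurj.forall₂.2 fun s t hst => (hH s t).2 ?_
    rwa [hα, hα] at hst
  · exact range_subset_iff.2 (hsurj.forall.2 fun t => ⟨t, (hα t).symm⟩)

theorem joinedByArcIn_of_joinedIn {S : Set X} {x y : X} (h : JoinedIn S x y) (hne : x ≠ y) :
    JoinedByArcIn S x y := by
  obtain ⟨γ, hγS⟩ := h
  obtain ⟨β, hβ, hβ₀, hβ₁, hβγ, hfib⟩ := exists_continuous_ordConnected_fibers γ.continuous
  replace hβ₀ : β 0 = x := hβ₀.trans γ.source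
  replace hβ₁ : β 1 = y := hβ₁.trans γ.target
  obtain ⟨α, hα, hinj, hα₀, hα₁, hαβ⟩ :=
    joinedByArcIn_range_of_ordConnected_fibers hβ hfib (by rwa [hβ₀, hβ₁])
  exact ⟨α, hα, hinj, hα₀.trans hβ₀, hα₁.trans hβ₁,
    hαβ.trans (hβγ.trans (range_subset_iff.2 hγS))⟩

end Reparametrization

theorem locally_arcwise_connected_general {X : Type*} [TopologicalSpace X]
    [TopologicalSpace.IsCompletelyMetrizableSpace X] [LocallyConnectedSpace X] (p : X) (U : Set X)
    (hU : U ∈ nhds p) :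
    ∃ V ∈ nhds p, V ⊆ U ∧ ∀ x ∈ V, ∀ y ∈ V, x ≠ y → JoinedByArcIn V x y := by
  let := TopologicalSpace.upgradeIsCompletelyMetrizable X
  have := locallyPathConnectedSpace_of_completeSpace (X := X)
  have hpath : IsPathConnected (pathComponentIn U p) :=
    isPathConnected_pathComponentIn (mem_of_mem_nhds hU)
  exact ⟨pathComponentIn U p, pathComponentIn_mem_nhds hU, pathComponentIn_subset,
    fun x hx y hy => joinedByArcIn_of_joinedIn (hpath.joinedIn x hx y hy)⟩

/-- Every compact, locally connected metric space is locally arcwise connected. -/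
theorem locally_arcwise_connected {X : Type*} [MetricSpace X] [CompactSpace X]
    [LocallyConnectedSpace X] (p : X) (U : Set X) (hU : U ∈ nhds p) :
    ∃ V ∈ nhds p, V ⊆ U ∧ ∀ x ∈ V, ∀ y ∈ V, x ≠ y → JoinedByArcIn V x y :=
  locally_arcwise_connected_general p U hU
end

section
/- Let f : ℂ → ℂ be the evaluation map of a polynomial of degree d ≥ 2. Then the filled Julia set K_f is nonempty and compact, and consequently the Julia set J_f = ∂K_f is nonempty and compact. -/
open Function Set Topology

/-- The filled Julia set of `f`: points with bounded forward orbit. -/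
def filledJulia (f : ℂ → ℂ) : Set ℂ :=
  {z : ℂ | Bornology.IsBounded (Set.range fun n => f^[n] z)}

/-!
A polynomial of degree at least two dominates the identity at infinity, so outside some closed disc
it at least doubles absolute values and every orbit that leaves the disc escapes to infinity. A
bounded orbit therefore never leaves the disc, which exhibits `K_f` as the intersection of the
closed sets `f^[n] ⁻¹' closedBall 0 R`. It is nonempty because `p - X` has a root, that is, `p` has
a fixed point. Since `ℂ` is connected and not compact, `K_f` is not clopen, so its frontier is
nonempty.
-/

open Bornology Filter Metric Polynomial

section EscapeRadius

variable {E : Type*} [SeminormedAddCommGroup E] {f : E → E} {c R : ℝ} {z : E}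

/-- `R` is an escape radius of `f` if the forward orbit of every point outside the closed ball of
radius `R` around `0` tends to infinity. Only orbits are constrained: `R` may be negative, and the
first iterates may come back into the ball. -/
def IsEscapeRadius (f : E → E) (R : ℝ) : Prop :=
  ∀ ⦃z⦄, R < ‖z‖ → Tendsto (fun n => f^[n] z) atTop (cobounded E)

lemma pow_mul_norm_le_norm_iterate (hc : 1 ≤ c) (hf : ∀ z, R ≤ ‖z‖ → c * ‖z‖ ≤ ‖f z‖)
    (hz : R ≤ ‖z‖) (n : ℕ) : c ^ n * ‖z‖ ≤ ‖f^[n] z‖ := by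
  induction n with
  | zero => simp
  | succ n ih =>
    have hR : R ≤ ‖f^[n] z‖ :=
      hz.trans <| (le_mul_of_one_le_left (norm_nonneg z) (one_le_pow₀ hc)).trans ih
    calc c ^ (n + 1) * ‖z‖ = c * (c ^ n * ‖z‖) := by ring
      _ ≤ c * ‖f^[n] z‖ := by gcongr
      _ ≤ ‖f (f^[n] z)‖ := hf _ hR
      _ = ‖f^[n + 1] z‖ := by rw [iterate_succ_apply']

lemma exists_isEscapeRadius_of_eventually_mul_norm_le (hc : 1 < c)
    (hf : ∀ᶠ z in cobounded E, c * ‖z‖ ≤ ‖f z‖) : ∃ R, IsEscapeRadius f R := by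
  obtain ⟨R, -, hR⟩ := hasBasis_cobounded_norm.eventually_iff.mp hf
  refine ⟨max R 0, fun z hz => ?_⟩
  obtain ⟨hRz, hz₀⟩ := max_lt_iff.mp hz
  rw [← tendsto_norm_atTop_iff_cobounded]
  exact tendsto_atTop_mono (pow_mul_norm_le_norm_iterate hc.le (fun _ hw => hR hw) hRz.le)
    ((tendsto_pow_atTop_atTop_of_one_lt hc).atTop_mul_const hz₀)

namespace IsEscapeRadius

lemma isBounded_range_iterate_iff (h : IsEscapeRadius f R) :
    IsBounded (range fun n => f^[n] z) ↔ ∀ n, ‖f^[n] z‖ ≤ R := by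
  refine ⟨fun hb n => ?_, fun hR => isBounded_iff_forall_norm_le.mpr ⟨R, forall_mem_range.mpr hR⟩⟩
  by_contra! hn
  have hescape : ∀ᶠ k in atTop, f^[k] (f^[n] z) ∈ (range fun n => f^[n] z)ᶜ :=
    (h hn).eventually (isBounded_def.mp hb)
  obtain ⟨k, hk⟩ := hescape.exists
  exact hk ⟨k + n, iterate_add_apply f k n z⟩

lemma setOf_isBounded_range_iterate_eq_iInter (h : IsEscapeRadius f R) :
    {z | IsBounded (range fun n => f^[n] z)} = ⋂ n, f^[n] ⁻¹' closedBall 0 R := by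
  ext z
  simp [h.isBounded_range_iterate_iff]

lemma isCompact_setOf_isBounded_range_iterate [ProperSpace E] (h : IsEscapeRadius f R)
    (hf : Continuous f) : IsCompact {z | IsBounded (range fun n => f^[n] z)} := by
  rw [h.setOf_isBounded_range_iterate_eq_iInter]
  exact (isCompact_closedBall 0 R).of_isClosed_subset
    (isClosed_iInter fun n => isClosed_closedBall.preimage (hf.iterate n)) (iInter_subset _ 0)

end IsEscapeRadius

end EscapeRadius

lemma isBounded_range_iterate_of_isFixedPt {X : Type*} [Bornology X] {f : X → X} {x : X}
    (hx : IsFixedPt f x) : IsBounded (range fun n => f^[n] x) := by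
  simp [iterate_fixed hx]

lemma exists_isEscapeRadius_eval {A : Type*} [NormedRing A] [NormMulClass A] {p : A[X]}
    (hp : 1 < p.natDegree) : ∃ R, IsEscapeRadius p.eval R := by
  have hX : (X : A[X]).eval =o[cobounded A] p.eval :=
    isLittleO_cobounded_of_degree_lt (degree_X_le.trans_lt (coe_lt_degree.mpr hp))
  refine exists_isEscapeRadius_of_eventually_mul_norm_le one_lt_two ?_
  simpa using Asymptotics.isLittleO_iff_nat_mul_le.mp hX 2

lemma exists_isFixedPt_eval {K : Type*} [Field K] [IsAlgClosed K] {p : K[X]}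
    (hp : p.natDegree ≠ 1) : ∃ z, IsFixedPt p.eval z := by
  have hdeg : (p - X).degree ≠ 0 := by
    intro h
    have hpX : p = X + C ((p - X).coeff 0) := by
      rw [← eq_C_of_degree_eq_zero h, add_sub_cancel]
    exact hp (hpX ▸ natDegree_X_add_C _)
  obtain ⟨z, hz⟩ := IsAlgClosed.exists_root (p - X) hdeg
  exact ⟨z, by simpa [IsFixedPt, IsRoot, sub_eq_zero] using hz⟩

/-- The filled Julia set is nonempty and compact; hence so is the Julia set. -/
theorem filledJulia_nonempty_compact (p : Polynomial ℂ) (d : ℕ) (hd : 2 ≤ d)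
    (hdeg : p.natDegree = d) (f : ℂ → ℂ) (hf : ∀ z, f z = p.eval z) :
    (filledJulia f).Nonempty ∧ IsCompact (filledJulia f) ∧
      (frontier (filledJulia f)).Nonempty ∧ IsCompact (frontier (filledJulia f)) := by
  obtain rfl : f = p.eval := funext hf
  obtain ⟨z, hz⟩ := exists_isFixedPt_eval (hdeg.trans_ne (by lia))
  obtain ⟨R, hR⟩ := exists_isEscapeRadius_eval (hd.trans_eq hdeg.symm)
  have hne : (filledJulia p.eval).Nonempty := ⟨z, isBounded_range_iterate_of_isFixedPt hz⟩
  have hcomp : IsCompact (filledJulia p.eval) :=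
    hR.isCompact_setOf_isBounded_range_iterate p.continuous
  exact ⟨hne, hcomp, nonempty_frontier_iff.mpr ⟨hne, hcomp.ne_univ⟩,
    hcomp.of_isClosed_subset isClosed_frontier hcomp.isClosed.frontier_subset⟩
end
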